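/- Let G be a simple graph on n vertices with domination number γ, where 1 ≤ γ ≤ n−1, and suppose the signless Laplacian spectral radius of G equals 2(n − γ) (i.e., 2(n−γ) is an eigenvalue of Q(G)). If G_1 is a connected component of G containing at least one edge whose signless Laplacian spectral radius equals that of G, then G_1 is (n−γ)-regular, i.e., every vertex of G_1 has degree exactly n − γ. -/

import Mathlib

open SimpleGraph Matrix

/-- `S` is a dominating set of `G`: every vertex outside `S` has a neighbor in `S`. -/
def IsDominatingSet {V : Type*} (G : SimpleGraph V) (S : Set V) : Prop :=
  ∀ v : V, v ∉ S → ∃ u ∈ S, G.Adj u v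

/-- The domination number of a finite graph: the minimum cardinality of a dominating set. -/
noncomputable def dominationNumber {V : Type*} [Fintype V] (G : SimpleGraph V) : ℕ :=
  sInf {k : ℕ | ∃ S : Finset V, S.card = k ∧ IsDominatingSet G (S : Set V)}

open scoped Classical in
/-- The signless Laplacian matrix `D(G) + A(G)` of a simple graph. -/
noncomputable def signlessLapMatrix {V : Type*} [Fintype V] (G : SimpleGraph V) :
    Matrix V V ℝ :=
  G.degMatrix ℝ + G.adjMatrix ℝ

open scoped Classical in
theorem regular_aux {W : Type*} [Fintype W] (H : SimpleGraph W) (hH : H.Preconnected) (k : ℕ)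
    (hk : ∀ v, H.degree v ≤ k)
    (he : Module.End.HasEigenvalue (Matrix.toLin' (signlessLapMatrix H)) (2 * (k : ℝ))) :
    ∀ v, H.degree v = k := by
  obtain ⟨x, hx⟩ := he.exists_hasEigenvector
  have hx0 : x ≠ 0 := hx.2
  have hxe : ∀ v, (H.degree v : ℝ) * x v + ∑ u ∈ H.neighborFinset v, x u = 2 * k * x v := by
    intro v
    have := congrFun hx.apply_eq_smul v
    simpa [signlessLapMatrix, Matrix.add_mulVec, SimpleGraph.degMatrix, Matrix.mulVec_diagonal,
      SimpleGraph.adjMatrix_mulVec_apply] using this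
  obtain ⟨w, hw⟩ := Function.ne_iff.mp hx0
  have : Nonempty W := ⟨w⟩
  obtain ⟨m, hm⟩ := Finite.exists_max (fun v => |x v|)
  have hpos : 0 < |x m| := lt_of_lt_of_le (abs_pos.mpr hw) (hm w)
  have key : ∀ v, |x v| = |x m| → H.degree v = k ∧ ∀ u, H.Adj v u → |x u| = |x m| := by
    intro v hv
    have h1 : (2 * k - (H.degree v : ℝ)) * |x m| ≤ ∑ u ∈ H.neighborFinset v, |x u| := by
      have hd : (H.degree v : ℝ) ≤ k := by exact_mod_cast hk v
      have h0 : (0 : ℝ) ≤ k := Nat.cast_nonneg k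
      have : ∑ u ∈ H.neighborFinset v, x u = (2 * k - (H.degree v : ℝ)) * x v := by
        linarith [hxe v]
      calc (2 * k - (H.degree v : ℝ)) * |x m| = |∑ u ∈ H.neighborFinset v, x u| := by
            rw [this, abs_mul, hv, abs_of_nonneg (a := 2 * (k : ℝ) - (H.degree v : ℝ)) (by linarith)]
        _ ≤ _ := Finset.abs_sum_le_sum_abs _ _
    have h2 : ∑ u ∈ H.neighborFinset v, |x u| ≤ H.degree v * |x m| := by
      have := Finset.sum_le_card_nsmul (H.neighborFinset v) (fun u => |x u|) |x m| (fun u _ => hm u)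
      simpa using this
    have h3 : H.degree v = k := by
      apply le_antisymm (hk v)
      by_contra hlt
      push Not at hlt
      have : (H.degree v : ℝ) < k := by exact_mod_cast hlt
      nlinarith
    refine ⟨h3, fun u hu => ?_⟩
    rw [h3] at h1 h2
    have hs : ∑ u ∈ H.neighborFinset v, |x u| = ∑ u ∈ H.neighborFinset v, |x m| := by
      rw [Finset.sum_const, SimpleGraph.card_neighborFinset_eq_degree, h3, nsmul_eq_mul]
      linarith
    exact (Finset.sum_eq_sum_iff_of_le (fun u _ => hm u)).1 hs u (by simpa using hu)
  have all : ∀ v, |x v| = |x m| := by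
    intro v
    obtain ⟨p⟩ := hH v m
    induction p with
    | nil => rfl
    | cons h p ih => exact (key _ (ih hm hpos key)).2 _ h.symm
  exact fun v => (key v (all v)).1

open scoped Classical in
theorem component_regular_of_signless_laplacian_spectral_radius_eq
    {V : Type*} [Fintype V] (G : SimpleGraph V)
    (n γ : ℕ) (hn : Fintype.card V = n) (hγ : dominationNumber G = γ)
    (hγ1 : 1 ≤ γ) (hγn : γ ≤ n - 1)
    (hrad : Module.End.HasEigenvalue (Matrix.toLin' (signlessLapMatrix G))
      (2 * ((n : ℝ) - γ)))
    (c : G.ConnectedComponent)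
    (hedge : ∃ x ∈ c.supp, ∃ y ∈ c.supp, G.Adj x y)
    (hc : Module.End.HasEigenvalue
      (Matrix.toLin' (signlessLapMatrix (G.induce c.supp))) (2 * ((n : ℝ) - γ))) :
    ∀ v : c.supp, (G.induce c.supp).degree v = n - γ := by
  have hfin : ∀ v : V, G.degree v + γ ≤ n := by
    intro v
    have h1 : γ ≤ ((G.neighborFinset v)ᶜ).card := by
      rw [← hγ]
      refine Nat.sInf_le ⟨_, rfl, ?_⟩
      intro u hu
      refine ⟨v, by simp, ?_⟩
      simpa using hu
    rw [Finset.card_compl, hn, SimpleGraph.card_neighborFinset_eq_degree] at h1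
    omega
  have hk : (2 * ((n : ℝ) - γ)) = 2 * ((n - γ : ℕ) : ℝ) := by
    rw [Nat.cast_sub (by omega)]
  rw [hk] at hc
  have := regular_aux (G.induce c.supp) c.connected_toSimpleGraph.preconnected (n - γ) ?_ hc
  · exact this
  · intro v
    have h4 := hfin v
    refine le_trans (b := G.degree (v : V)) ?_ (by omega)
    rw [← SimpleGraph.card_neighborFinset_eq_degree, ← SimpleGraph.card_neighborFinset_eq_degree]
    apply Finset.card_le_card_of_injOn Subtype.val
    · intro w hw
      simpa using hw
    · exact Subtype.val_injective.injOn
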